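/- Let D be a vertex-critical strongly connected simple digraph on n vertices containing a chordless directed cycle C with k = |V(C)| ≥ 3 and V(C) ≠ V(D), and let J = D/V(C). Then |E(D)| − |E(J)| ≤ (k−1)n − (k² − 2k + 2). -/

import Mathlib

/-!
Write `A` for the vertex set of the cycle, `m = n - k` for the number of vertices outside it, and
for `w ∉ A` let `b w` and `a w` be the numbers of edges from `A` to `w` and from `w` to `A`.
Contracting `A` loses the `k` cycle edges and, at each `w ∉ A`, `(a w - 1) + (b w - 1)` edges
(truncated subtraction), so the claim is `S + 2 ≤ (k - 1) * m`, where `S` is the sum of these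
numbers (`edgeCount_le`).

Call a vertex `z` *good* if the remaining vertices of `A` are mutually reachable in `D - z`. Every
`z ∉ A` is good, and `v i` is good iff it is *bypassed*, meaning that `v (i - 1)` reaches
`v (i + 1)` in `D - v i`. If `z` is good, criticality yields a vertex `y ≠ z` such that in `D - z` either `y` is not reachable from `A \ {z}`
or `A \ {z}` is not reachable from `y` (`exists_dominated`). In the first case `z` dominates `y`,
so `y ∉ A` and `b y ≤ 1`; in the second case the same holds in the reversed digraph and `a y ≤ 1`.
Sending `z` to a vertex immediately dominated by it, that is, to a child in the dominator tree, is
injective (`exists_injOn_child`). Hence the number of good vertices is at most the number of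
vanishing terms among the `2 * m` terms `a w - 1`, `b w - 1`, each of which is at most `k - 1`.

* If some `v i` is good, there are at least `m + 1` good vertices, so `S ≤ (k - 1) * (m - 1)`, which
  is enough since `k ≥ 3`.
* Otherwise no path leads from `v (i - 1)` to `v (i + 1)` around `v i`. Then `a w + b w ≤ k`, and
  neither `a w` nor `b w` equals `k`, so that each vertex contributes at most `k - 2`. As `m ≥ 2`
  by `exists_dominated`, again `S + 2 ≤ (k - 1) * m`.
-/

/-- A digraph (given by its adjacency relation) is strongly connected if every
vertex is reachable from every other vertex by a directed path. -/
def StronglyConnected {V : Type*} (G : V → V → Prop) : Prop :=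
  ∀ a b : V, Relation.ReflTransGen G a b

/-- The digraph obtained from `G` by deleting the vertex `z`. -/
def DelVert {V : Type*} (G : V → V → Prop) (z : V) :
    {x : V // x ≠ z} → {x : V // x ≠ z} → Prop :=
  fun a b => G a.1 b.1

/-- The digraph obtained from `G` by deleting the vertex set `A`. -/
def DelSet {V : Type*} (G : V → V → Prop) (A : Set V) :
    {x : V // x ∉ A} → {x : V // x ∉ A} → Prop :=
  fun a b => G a.1 b.1

/-- The contraction `D/A`: the set `A` is replaced by a single new vertex
(represented by `none`) whose out-neighbors are `⋃ v ∈ A, E⁺(v) \ A` and whose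
in-neighbors are `⋃ v ∈ A, E⁻(v) \ A`; edges outside `A` are preserved. -/
def Contract {V : Type*} (G : V → V → Prop) (A : Set V) :
    Option {x : V // x ∉ A} → Option {x : V // x ∉ A} → Prop
  | some u, some w => G u.1 w.1
  | none, some w => ∃ x ∈ A, G x w.1
  | some u, none => ∃ x ∈ A, G u.1 x
  | none, none => False

/-- The degree of a vertex: `|E⁺(v)| + |E⁻(v)|`. -/
noncomputable def deg {V : Type*} (G : V → V → Prop) (v : V) : ℕ :=
  {u | G v u}.ncard + {u | G u v}.ncard

/-- The number of directed edges of the digraph. -/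
noncomputable def edgeCount {V : Type*} (G : V → V → Prop) : ℕ :=
  {p : V × V | G p.1 p.2}.ncard

/-- A digraph is vertex-critical strongly connected if it is strongly connected
and the removal of any vertex destroys strong connectivity. -/
def Critical {V : Type*} (G : V → V → Prop) : Prop :=
  StronglyConnected G ∧ ∀ z : V, ¬ StronglyConnected (DelVert G z)

/-- `v : ZMod k → V` enumerates a chordless directed cycle of `G`:
the vertices are distinct, consecutive vertices are joined by the cycle edges,
and these are the only edges of `G` among the vertices of the cycle. -/
structure IsChordlessCycle {V : Type*} (G : V → V → Prop) {k : ℕ} (v : ZMod k → V) : Prop where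
  inj : Function.Injective v
  edges : ∀ i, G (v i) (v (i + 1))
  chordless : ∀ i j, G (v i) (v j) → j = i + 1

open Classical in
/-- The number of edges from the cycle `v` to the vertex `y`. The number of edges from `y` to the
cycle is `fromCyc (flip G) v y`. -/
noncomputable def fromCyc {V : Type*} (G : V → V → Prop) {k : ℕ} [NeZero k] (v : ZMod k → V)
    (y : V) : ℕ :=
  (Finset.univ.filter fun i => G (v i) y).card

/-- The edges of `G - z`, as a relation on all of `V`. -/
def Avoid {V : Type*} (G : V → V → Prop) (z a b : V) : Prop :=
  G a b ∧ a ≠ z ∧ b ≠ z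

/-- `Reach G A z y`: the vertex `y` is reachable from `A \ {z}` in `G - z`. Thus `¬ Reach G A z y`
says that `z` dominates `y` with respect to the root set `A`; in particular `z` dominates itself. -/
inductive Reach {V : Type*} (G : V → V → Prop) (A : Set V) (z : V) : V → Prop
  | base (s : V) (hs : s ∈ A) (hz : s ≠ z) : Reach G A z s
  | step (x y : V) (hx : Reach G A z x) (hxy : G x y) (hz : y ≠ z) : Reach G A z y

/-! ### Domination -/

section Domination

variable {V : Type*} {G : V → V → Prop} {A : Set V}

lemma Reach.ne {z y : V} (h : Reach G A z y) : y ≠ z := by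
  cases h <;> assumption

lemma Reach.exists_path {z y : V} (h : Reach G A z y) :
    ∃ s ∈ A, s ≠ z ∧ Relation.ReflTransGen (Avoid G z) s y := by
  induction h with
  | base s hs hz => exact ⟨s, hs, hz, .refl⟩
  | step x y hx hxy hz ih =>
    obtain ⟨s, hs, hsz, hp⟩ := ih
    exact ⟨s, hs, hsz, hp.tail ⟨hxy, hx.ne, hz⟩⟩

lemma induction_from (hG : StronglyConnected G) (hA : A.Nonempty) {P : V → Prop}
    (base : ∀ s ∈ A, P s) (step : ∀ x y, P x → G x y → P y) (y : V) : P y := by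
  obtain ⟨s, hs⟩ := hA
  have h := hG s y
  induction h with
  | refl => exact base s hs
  | tail _ h ih => exact step _ _ ih h

/-- If `z` dominates `y`, then `y` dominates only vertices dominated by `z`. -/
lemma Reach.mono {z y x : V} (hy : ¬ Reach G A z y) (hx : Reach G A z x) : Reach G A y x := by
  induction hx with
  | base s hs hz =>
    refine .base s hs ?_
    rintro rfl
    exact hy (.base _ hs hz)
  | step x x' hx hxx hz ih =>
    refine .step x x' ih hxx ?_
    rintro rfl
    exact hy (.step _ _ hx hxx hz)

/-- Domination is antisymmetric. -/
lemma reach_of_not_reach (hG : StronglyConnected G) (hA : A.Nonempty) {z y : V} (hne : y ≠ z)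
    (hy : ¬ Reach G A z y) : Reach G A y z := by
  by_contra hz
  refine hy (induction_from hG hA (P := Reach G A z) ?_ ?_ y)
  · intro s hs
    refine .base s hs ?_
    rintro rfl
    exact hz (.base _ hs hne.symm)
  · intro x x' hx hxx
    refine .step x x' hx hxx ?_
    rintro rfl
    exact hz (.step _ _ (hx.mono hy) hxx hne.symm)

/-- Two vertices dominating a common vertex are comparable for domination. -/
lemma dominators_comparable (hG : StronglyConnected G) (hA : A.Nonempty) {z z' y : V}
    (hne : z ≠ z') (hy : ¬ Reach G A z y) (hy' : ¬ Reach G A z' y) :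
    ¬ Reach G A z z' ∨ ¬ Reach G A z' z := by
  by_contra! h
  obtain ⟨h1, h2⟩ := h
  have key : Reach G A z y ∨ Reach G A z' y := by
    refine induction_from hG hA (P := fun y => Reach G A z y ∨ Reach G A z' y) ?_ ?_ y
    · intro s hs
      by_cases hsz : s = z
      · exact .inr (.base s hs (hsz ▸ hne))
      · exact .inl (.base s hs hsz)
    · rintro x x' (hx | hx) hxx
      · by_cases hz : x' = z
        · exact .inr (hz ▸ h2)
        · exact .inl (.step _ _ hx hxx hz)
      · by_cases hz : x' = z'
        · exact .inl (hz ▸ h1)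
        · exact .inr (.step _ _ hx hxx hz)
  exact key.elim hy hy'

/-- The vertices that dominate some other vertex can be sent injectively to vertices they
dominate. A child in the dominator tree is found as a dominated vertex which itself dominates as
many vertices as possible. -/
lemma exists_injOn_child [Finite V] (hG : StronglyConnected G) (hA : A.Nonempty) :
    ∃ ch : V → V, Set.InjOn ch {z | ∃ y, y ≠ z ∧ ¬ Reach G A z y} ∧
      ∀ z, (∃ y, y ≠ z ∧ ¬ Reach G A z y) → ch z ≠ z ∧ ¬ Reach G A z (ch z) := by
  have hlt : ∀ z y, y ≠ z → ¬ Reach G A z y →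
      {x | ¬ Reach G A y x}.ncard < {x | ¬ Reach G A z x}.ncard := by
    intro z y hne hy
    refine Set.ncard_lt_ncard ((Set.ssubset_iff_of_subset ?_).2 ⟨z, ?_, ?_⟩) (Set.toFinite _)
    · exact fun x hx hx' => hx (hx'.mono hy)
    · exact fun h => h.ne rfl
    · exact fun h => h (reach_of_not_reach hG hA hne hy)
  have hex : ∀ z, ∃ c, (∃ y, y ≠ z ∧ ¬ Reach G A z y) → (c ≠ z ∧ ¬ Reach G A z c) ∧
      ∀ y, y ≠ z → ¬ Reach G A z y →
        {x | ¬ Reach G A y x}.ncard ≤ {x | ¬ Reach G A c x}.ncard := by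
    intro z
    by_cases h : ∃ y, y ≠ z ∧ ¬ Reach G A z y
    · obtain ⟨c, hc, hmax⟩ := Set.exists_max_image {y | y ≠ z ∧ ¬ Reach G A z y}
        (fun y => {x | ¬ Reach G A y x}.ncard) (Set.toFinite _) h
      exact ⟨c, fun _ => ⟨hc, fun y h1 h2 => hmax y ⟨h1, h2⟩⟩⟩
    · exact ⟨z, fun h' => absurd h' h⟩
  choose ch hch using hex
  refine ⟨ch, ?_, fun z hz => (hch z hz).1⟩
  intro z hz z' hz' heq
  by_contra hne
  obtain ⟨⟨h1, h2⟩, h3⟩ := hch z hz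
  obtain ⟨⟨h1', h2'⟩, h3'⟩ := hch z' hz'
  rw [← heq] at h1' h2' h3'
  rcases dominators_comparable hG hA hne h2 h2' with h | h
  · exact absurd (h3 z' (Ne.symm hne) h) (not_le.2 (hlt z' _ h1' h2'))
  · exact absurd (h3' z hne h) (not_le.2 (hlt z _ h1 h2))

end Domination

/-! ### Consequences of criticality -/

lemma reflTransGen_avoid_flip {V : Type*} {G : V → V → Prop} {z a b : V}
    (h : Relation.ReflTransGen (Avoid (flip G) z) a b) :
    Relation.ReflTransGen (Avoid G z) b a := by
  refine Relation.ReflTransGen.mono ?_ _ _ h.swap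
  exact fun x y hxy => ⟨hxy.1, hxy.2.2, hxy.2.1⟩

lemma stronglyConnected_flip {V : Type*} {G : V → V → Prop} (hG : StronglyConnected G) :
    StronglyConnected (flip G) := fun a b => (hG b a).swap

lemma delVert_path {V : Type*} {G : V → V → Prop} {z a b : V} (ha : a ≠ z)
    (h : Relation.ReflTransGen (Avoid G z) a b) :
    ∃ hb : b ≠ z, Relation.ReflTransGen (DelVert G z) ⟨a, ha⟩ ⟨b, hb⟩ := by
  induction h with
  | refl => exact ⟨ha, .refl⟩
  | tail _ h ih =>
    obtain ⟨hb, hp⟩ := ih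
    exact ⟨h.2.2, hp.tail h.1⟩

/-- A vertex `z` whose deletion leaves `A \ {z}` mutually reachable, in a critical digraph,
dominates another vertex with respect to the root set `A`, either in `G` or in its reverse. -/
lemma exists_dominated {V : Type*} {G : V → V → Prop} {A : Set V} {z : V}
    (hcrit : ¬ StronglyConnected (DelVert G z))
    (hz : ∀ s ∈ A, ∀ t ∈ A, s ≠ z → t ≠ z → Relation.ReflTransGen (Avoid G z) s t) :
    (∃ y, y ≠ z ∧ ¬ Reach G A z y) ∨ (∃ y, y ≠ z ∧ ¬ Reach (flip G) A z y) := by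
  by_contra! h
  obtain ⟨h1, h2⟩ := h
  apply hcrit
  rintro ⟨a, ha⟩ ⟨b, hb⟩
  obtain ⟨s, hs, hsz, hp⟩ := (h2 a ha).exists_path
  obtain ⟨t, ht, htz, hq⟩ := (h1 b hb).exists_path
  exact (delVert_path ha ((reflTransGen_avoid_flip hp).trans ((hz s hs t ht hsz htz).trans hq))).2

open Classical in
/-- There are at least as many vertices outside the cycle with at most one in-edge from it as there
are vertices dominating another vertex: a dominated vertex receives no edge from the cycle except
possibly from its dominator. -/
lemma card_dominators_le {V : Type*} [Fintype V] {G : V → V → Prop} {k : ℕ} [NeZero k]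
    {v : ZMod k → V} (hG : StronglyConnected G) (hinj : Function.Injective v) :
    (Finset.univ.filter fun z => ∃ y, y ≠ z ∧ ¬ Reach G (Set.range v) z y).card ≤
      (Finset.univ.filter fun y => y ∉ Set.range v ∧ fromCyc G v y ≤ 1).card := by
  obtain ⟨ch, hinj', hch⟩ := exists_injOn_child hG (Set.range_nonempty v)
  refine Finset.card_le_card_of_injOn ch ?_ ?_
  · intro z hz
    obtain ⟨h1, h2⟩ := hch z (by simpa using hz)
    simp only [Finset.coe_filter, Finset.mem_univ, true_and, Set.mem_ofPred_eq]
    refine ⟨fun h => h2 (.base _ h h1), ?_⟩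
    refine Finset.card_le_one.2 ?_
    have key : ∀ i, G (v i) (ch z) → v i = z := by
      intro i hi
      by_contra hne
      exact h2 (.step _ _ (.base _ ⟨i, rfl⟩ hne) hi h1)
    intro i hi j hj
    simp only [Finset.mem_filter, Finset.mem_univ, true_and] at hi hj
    exact hinj ((key i hi).trans (key j hj).symm)
  · intro z hz z' hz' h
    exact hinj' (by simpa using hz) (by simpa using hz') h

/-! ### Paths around a cycle vertex -/

/-- Every path from `A` has a last vertex in `A`, after which it avoids the rest of `A`. -/
lemma exists_last_exit {V : Type*} {G : V → V → Prop} {A : Set V} (hG : StronglyConnected G)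
    (hA : A.Nonempty) (w : V) :
    ∃ s ∈ A, ∀ z ∈ A, z ≠ s → w ≠ z ∧ Relation.ReflTransGen (Avoid G z) s w := by
  refine induction_from hG hA (P := fun w => ∃ s ∈ A, ∀ z ∈ A, z ≠ s →
    w ≠ z ∧ Relation.ReflTransGen (Avoid G z) s w) ?_ ?_ w
  · exact fun s hs => ⟨s, hs, fun z _ hz => ⟨hz.symm, .refl⟩⟩
  · rintro x y ⟨s, hs, h⟩ hxy
    by_cases hy : y ∈ A
    · exact ⟨y, hy, fun z _ hz => ⟨hz.symm, .refl⟩⟩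
    · refine ⟨s, hs, fun z hz hzs => ?_⟩
      obtain ⟨h1, h2⟩ := h z hz hzs
      have hyz : y ≠ z := by rintro rfl; exact hy hz
      exact ⟨hyz, h2.tail ⟨hxy, h1, hyz⟩⟩

/-- If no cycle vertex is bypassed, no vertex sends edges to all of the cycle. -/
lemma exists_not_to {V : Type*} {G : V → V → Prop} {k : ℕ} {v : ZMod k → V}
    (hG : StronglyConnected G) (hk : 3 ≤ k) (hinj : Function.Injective v)
    (hno : ∀ i, ¬ Relation.ReflTransGen (Avoid G (v i)) (v (i - 1)) (v (i + 1))) (w : V) :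
    ∃ i, ¬ G w (v i) := by
  by_contra! h
  have : Fact (1 < k) := ⟨by omega⟩
  obtain ⟨_, ⟨j, rfl⟩, hs⟩ := exists_last_exit hG (Set.range_nonempty v) w
  obtain ⟨h1, h2⟩ := hs (v (j + 1)) ⟨_, rfl⟩ (fun e => by simpa using hinj e)
  refine hno (j + 1) ?_
  rw [add_sub_cancel_right]
  exact h2.tail ⟨h _, h1, fun e => by simpa using hinj e⟩

/-- If no cycle vertex is bypassed, no vertex receives edges from all of the cycle. -/
lemma exists_not_from {V : Type*} {G : V → V → Prop} {k : ℕ} {v : ZMod k → V}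
    (hG : StronglyConnected G) (hk : 3 ≤ k) (hinj : Function.Injective v)
    (hno : ∀ i, ¬ Relation.ReflTransGen (Avoid G (v i)) (v (i - 1)) (v (i + 1))) (w : V) :
    ∃ i, ¬ G (v i) w := by
  by_contra! h
  have : Fact (1 < k) := ⟨by omega⟩
  obtain ⟨_, ⟨j, rfl⟩, hs⟩ :=
    exists_last_exit (stronglyConnected_flip hG) (Set.range_nonempty v) w
  obtain ⟨h1, h2⟩ := hs (v (j - 1)) ⟨_, rfl⟩ (fun e => by simpa using hinj e)
  refine hno (j - 1) ?_
  rw [sub_add_cancel]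
  exact (reflTransGen_avoid_flip h2).head ⟨h _, fun e => by simpa using hinj e, h1⟩

section Cycle

variable {V : Type*} {G : V → V → Prop} {k : ℕ} [NeZero k] {v : ZMod k → V}

/-- Every vertex outside the cycle is good. -/
lemma good_of_notMem (hC : IsChordlessCycle G v) {z : V} (hz : z ∉ Set.range v) :
    ∀ s ∈ Set.range v, ∀ t ∈ Set.range v, s ≠ z → t ≠ z →
      Relation.ReflTransGen (Avoid G z) s t := by
  have key : ∀ (i : ZMod k) (t : ℕ), Relation.ReflTransGen (Avoid G z) (v i) (v (i + t)) := by
    intro i t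
    induction t with
    | zero => simp [Relation.ReflTransGen.refl]
    | succ t ih =>
      refine ih.tail ⟨?_, fun h => hz ⟨_, h⟩, fun h => hz ⟨_, h⟩⟩
      have := hC.edges (i + t)
      rwa [add_assoc, ← Nat.cast_succ] at this
  rintro _ ⟨i, rfl⟩ _ ⟨j, rfl⟩ _ _
  simpa using key i (j - i).val

/-- A bypassed cycle vertex is good. -/
lemma good_of_bypass (hC : IsChordlessCycle G v) {i : ZMod k}
    (hi : Relation.ReflTransGen (Avoid G (v i)) (v (i - 1)) (v (i + 1))) :
    ∀ s ∈ Set.range v, ∀ t ∈ Set.range v, s ≠ v i → t ≠ v i →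
      Relation.ReflTransGen (Avoid G (v i)) s t := by
  have fwd : ∀ t : ℕ, v (i + 1 + t) ≠ v i →
      Relation.ReflTransGen (Avoid G (v i)) (v (i + 1)) (v (i + 1 + t)) := by
    intro t
    induction t with
    | zero => simp [Relation.ReflTransGen.refl]
    | succ t ih =>
      intro hne
      by_cases h : v (i + 1 + t) = v i
      · -- The walk once around the cycle restarts at `v (i + 1)`.
        have h' : i + 1 + ((t + 1 : ℕ) : ZMod k) = i + 1 := by
          have := hC.inj h
          push_cast
          linear_combination this
        rw [h']
      · refine (ih h).tail ⟨?_, h, hne⟩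
        have := hC.edges (i + 1 + t)
        rwa [show i + 1 + (t : ZMod k) + 1 = i + 1 + ((t + 1 : ℕ) : ZMod k) by
          push_cast; ring] at this
  have bwd : ∀ t : ℕ, v (i - 1 - t) ≠ v i →
      Relation.ReflTransGen (Avoid G (v i)) (v (i - 1 - t)) (v (i - 1)) := by
    intro t
    induction t with
    | zero => simp [Relation.ReflTransGen.refl]
    | succ t ih =>
      intro hne
      by_cases h : v (i - 1 - t) = v i
      · have h' : i - 1 - ((t + 1 : ℕ) : ZMod k) = i - 1 := by
          have := hC.inj h
          push_cast
          linear_combination this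
        rw [h']
      · refine (ih h).head ⟨?_, hne, h⟩
        have := hC.edges (i - 1 - ((t + 1 : ℕ) : ZMod k))
        rwa [show i - 1 - ((t + 1 : ℕ) : ZMod k) + 1 = i - 1 - (t : ZMod k) by
          push_cast; ring] at this
  rintro _ ⟨a, rfl⟩ _ ⟨b, rfl⟩ ha hb
  have e1 : i - 1 - ((i - 1 - a).val : ZMod k) = a := by simp
  have e2 : i + 1 + ((b - (i + 1)).val : ZMod k) = b := by simp
  have h1 := bwd (i - 1 - a).val (by rwa [e1])
  have h2 := fwd (b - (i + 1)).val (by rwa [e2])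
  rw [e1] at h1
  rw [e2] at h2
  exact h1.trans (hi.trans h2)

lemma fromCyc_le (y : V) : fromCyc G v y ≤ k := by
  classical
  refine (Finset.card_le_univ _).trans ?_
  simp [ZMod.card]

lemma fromCyc_lt {y : V} (h : ∃ i, ¬ G (v i) y) : fromCyc G v y < k := by
  classical
  obtain ⟨i, hi⟩ := h
  have := Finset.card_lt_univ_of_notMem (s := Finset.univ.filter fun i => G (v i) y) (x := i)
    (by simpa using hi)
  rw [ZMod.card] at this
  unfold fromCyc
  convert this

/-- If no cycle vertex is bypassed, then `v (i - 1) → w` and `w → v (i + 1)` never hold together, so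
at most `k` edges join the cycle and `w ∉ range v`. -/
lemma fromCyc_add_le (hk : 3 ≤ k) (hinj : Function.Injective v)
    (hno : ∀ i, ¬ Relation.ReflTransGen (Avoid G (v i)) (v (i - 1)) (v (i + 1))) {w : V}
    (hw : w ∉ Set.range v) :
    fromCyc (flip G) v w + fromCyc G v w ≤ k := by
  classical
  have : Fact (1 < k) := ⟨by omega⟩
  have hb : fromCyc G v w = ((Finset.univ.filter fun i => G (v i) w).map
      (addRightEmbedding (2 : ZMod k))).card := by
    rw [Finset.card_map]
    unfold fromCyc
    congr
  have ha : fromCyc (flip G) v w = (Finset.univ.filter fun i => G w (v i)).card := by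
    unfold fromCyc flip
    congr
  rw [ha, hb, ← Finset.card_union_of_disjoint]
  · refine (Finset.card_le_univ _).trans ?_
    simp [ZMod.card]
  · rw [Finset.disjoint_left]
    intro j hj hj'
    simp only [Finset.mem_filter, Finset.mem_univ, true_and, Finset.mem_map,
      addRightEmbedding_apply] at hj hj'
    obtain ⟨i, hi, rfl⟩ := hj'
    have hwz : w ≠ v (i + 1) := fun h => hw ⟨_, h.symm⟩
    refine hno (i + 1) ?_
    rw [add_sub_cancel_right, add_assoc, one_add_one_eq_two]
    refine (Relation.ReflTransGen.single ⟨hi, fun e => by simpa using hinj e, hwz⟩).tail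
      ⟨hj, hwz, fun e => ?_⟩
    have h2 : (2 : ZMod k) = 1 := by simpa using hinj e
    exact one_ne_zero (by linear_combination h2 : (1 : ZMod k) = 0)

end Cycle

/-! ### Counting the edges lost by the contraction -/

open Classical in
/-- The indicator of a proposition, as a natural number. -/
noncomputable def ind (p : Prop) : ℕ := if p then 1 else 0

lemma edgeCount_eq_sum {V : Type*} [Fintype V] (G : V → V → Prop) :
    edgeCount G = ∑ u, ∑ w, ind (G u w) := by
  classical
  unfold edgeCount ind
  rw [← Fintype.sum_prod_type (fun p : V × V => if G p.1 p.2 then 1 else 0),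
    Set.ncard_eq_toFinset_card', ← Finset.card_filter]
  congr 1
  ext
  simp

open Classical in
lemma sum_eq_range_add {V : Type*} [Fintype V] {k : ℕ} [NeZero k] {v : ZMod k → V}
    (hinj : Function.Injective v) (f : V → ℕ) :
    ∑ u, f u = ∑ i, f (v i) + ∑ w : {x // x ∉ Set.range v}, f w.1 := by
  rw [← Fintype.sum_subtype_add_sum_subtype (fun x => x ∈ Set.range v) f]
  congr 1
  symm
  convert Fintype.sum_equiv (Equiv.ofInjective v hinj) (fun i => f (v i)) (fun x => f x.1)
    fun _ => rfl

open Classical in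
lemma fromCyc_eq_sum {V : Type*} (G : V → V → Prop) {k : ℕ} [NeZero k] (v : ZMod k → V) (y : V) :
    fromCyc G v y = ∑ i, ind (G (v i) y) := by
  unfold fromCyc ind
  exact Finset.card_filter _ _

open Classical in
lemma fromCyc_le_ind {V : Type*} (G : V → V → Prop) {k : ℕ} [NeZero k] (v : ZMod k → V) (y : V) :
    fromCyc G v y ≤ ind (∃ x ∈ Set.range v, G x y) + (fromCyc G v y - 1) := by
  unfold ind
  split_ifs with h
  · omega
  · have : fromCyc G v y = 0 := by
      unfold fromCyc
      rw [Finset.card_eq_zero, Finset.filter_eq_empty_iff]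
      exact fun i _ hi => h ⟨_, ⟨i, rfl⟩, hi⟩
    omega

open Classical in
/-- Contracting the cycle loses at most the `k` cycle edges and all but one of the edges in each direction
between the cycle and each outside vertex. -/
lemma edgeCount_le {V : Type*} [Fintype V] {G : V → V → Prop} {k : ℕ} [NeZero k] {v : ZMod k → V}
    (hC : IsChordlessCycle G v) :
    edgeCount G ≤ edgeCount (Contract G (Set.range v)) + k +
      ∑ w : {x // x ∉ Set.range v}, ((fromCyc (flip G) v w.1 - 1) + (fromCyc G v w.1 - 1)) := by
  have hcyc : ∑ i, ∑ j, ind (G (v i) (v j)) ≤ k := by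
    calc ∑ i, ∑ j, ind (G (v i) (v j))
        ≤ ∑ i : ZMod k, ∑ j, (if j = i + 1 then 1 else 0) := by
          refine Finset.sum_le_sum fun i _ => Finset.sum_le_sum fun j _ => ?_
          unfold ind
          split_ifs with h1 h2
          · exact le_rfl
          · exact absurd (hC.chordless i j h1) h2
          all_goals simp
      _ = k := by simp [ZMod.card]
  have hb := Finset.sum_le_sum fun (w : {x // x ∉ Set.range v}) (_ : w ∈ Finset.univ) =>
    fromCyc_le_ind G v w.1
  have ha := Finset.sum_le_sum fun (w : {x // x ∉ Set.range v}) (_ : w ∈ Finset.univ) =>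
    fromCyc_le_ind (flip G) v w.1
  rw [Finset.sum_add_distrib] at ha hb
  have hD : edgeCount G = ∑ i, ∑ j, ind (G (v i) (v j))
      + ∑ w : {x // x ∉ Set.range v}, fromCyc G v w.1
      + (∑ w : {x // x ∉ Set.range v}, fromCyc (flip G) v w.1
        + ∑ u : {x // x ∉ Set.range v}, ∑ w : {x // x ∉ Set.range v}, ind (G u.1 w.1)) := by
    rw [edgeCount_eq_sum, sum_eq_range_add hC.inj]
    simp_rw [fun u => sum_eq_range_add hC.inj (fun w => ind (G u w)), Finset.sum_add_distrib,
      fromCyc_eq_sum, flip]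
    rw [Finset.sum_comm (s := (Finset.univ : Finset (ZMod k)))
      (t := (Finset.univ : Finset {x // x ∉ Set.range v}))]
  have hJ : edgeCount (Contract G (Set.range v)) =
      ∑ w : {x // x ∉ Set.range v}, ind (∃ x ∈ Set.range v, G x w.1)
      + (∑ w : {x // x ∉ Set.range v}, ind (∃ x ∈ Set.range v, flip G x w.1)
        + ∑ u : {x // x ∉ Set.range v}, ∑ w : {x // x ∉ Set.range v}, ind (G u.1 w.1)) := by
    have h0 : ind False = 0 := if_neg not_false
    rw [edgeCount_eq_sum]
    simp only [Fintype.sum_option, Contract, Finset.sum_add_distrib, flip, h0, zero_add]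
    rw [add_left_comm]
  rw [hD, hJ, Finset.sum_add_distrib]
  omega

/-! ### The two cases -/

/-- The bound on the sum of the lost edges when some cycle vertex is bypassed. -/
lemma sum_le_of_bypass {V : Type*} [Fintype V] {G : V → V → Prop} {k : ℕ} [NeZero k]
    {v : ZMod k → V} (hcrit : Critical G) (hC : IsChordlessCycle G v) {i : ZMod k}
    (hi : Relation.ReflTransGen (Avoid G (v i)) (v (i - 1)) (v (i + 1))) (m : ℕ)
    (s : Finset V) (hs : ∀ x, x ∈ s ↔ x ∉ Set.range v) (hm : s.card = m) :
    ∑ w ∈ s, ((fromCyc (flip G) v w - 1) + (fromCyc G v w - 1)) + (k - 1) ≤ (k - 1) * m := by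
  classical
  have hout := card_dominators_le (v := v) hcrit.1 hC.inj
  have hin := card_dominators_le (v := v) (stronglyConnected_flip hcrit.1) hC.inj
  have hgood : insert (v i) s ⊆
      (Finset.univ.filter fun z => ∃ y, y ≠ z ∧ ¬ Reach G (Set.range v) z y) ∪
      (Finset.univ.filter fun z => ∃ y, y ≠ z ∧ ¬ Reach (flip G) (Set.range v) z y) := by
    intro z hz
    simp only [Finset.mem_union, Finset.mem_filter, Finset.mem_univ, true_and]
    refine exists_dominated (hcrit.2 z) ?_
    rcases Finset.mem_insert.1 hz with rfl | hz
    · exact good_of_bypass hC hi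
    · exact good_of_notMem hC ((hs z).1 hz)
  have hcard := (Finset.card_le_card hgood).trans (Finset.card_union_le _ _)
  rw [Finset.card_insert_of_notMem (fun h => (hs _).1 h ⟨i, rfl⟩), hm] at hcard
  have hterm : ∀ (H : V → V → Prop),
      ∑ w ∈ s, (fromCyc H v w - 1) +
        (k - 1) * (Finset.univ.filter fun y => y ∉ Set.range v ∧ fromCyc H v y ≤ 1).card ≤
        (k - 1) * m := by
    intro H
    have e : (Finset.univ.filter fun y => y ∉ Set.range v ∧ fromCyc H v y ≤ 1) =
        s.filter fun y => fromCyc H v y ≤ 1 := by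
      ext y
      simp only [Finset.mem_filter, Finset.mem_univ, true_and, hs]
    rw [e, Finset.card_filter, Finset.mul_sum, ← Finset.sum_add_distrib, ← hm, mul_comm,
      ← smul_eq_mul]
    refine Finset.sum_le_card_nsmul _ _ _ fun w _ => ?_
    have := fromCyc_le (G := H) (v := v) w
    split_ifs with h <;> simp only [mul_one, mul_zero] <;> omega
  have h1 := hterm G
  have h2 := hterm (flip G)
  have h3 := Nat.mul_le_mul_left (k - 1) (hcard.trans (Nat.add_le_add hout hin))
  rw [Finset.sum_add_distrib]
  rw [mul_add, mul_add, mul_one] at h3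
  omega

/-- The bound on the sum of the lost edges when no cycle vertex is bypassed. -/
lemma sum_le_of_no_bypass {V : Type*} {G : V → V → Prop} {k : ℕ} [NeZero k]
    {v : ZMod k → V} (hcrit : Critical G) (hk : 3 ≤ k) (hC : IsChordlessCycle G v)
    (hno : ∀ i, ¬ Relation.ReflTransGen (Avoid G (v i)) (v (i - 1)) (v (i + 1))) (m : ℕ)
    (s : Finset V) (hs : ∀ x, x ∈ s ↔ x ∉ Set.range v) (hm : s.card = m) (hne : s.Nonempty) :
    ∑ w ∈ s, ((fromCyc (flip G) v w - 1) + (fromCyc G v w - 1)) + 2 ≤ (k - 1) * m := by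
  have hm2 : 2 ≤ m := by
    obtain ⟨z, hz⟩ := hne
    rw [← hm]
    refine Finset.one_lt_card.2 ⟨z, hz, ?_⟩
    rcases exists_dominated (hcrit.2 z) (good_of_notMem hC ((hs z).1 hz)) with
      ⟨y, h1, h2⟩ | ⟨y, h1, h2⟩
    all_goals exact ⟨y, (hs y).2 fun h => h2 (.base _ h h1), h1.symm⟩
  have hb : ∑ w ∈ s, ((fromCyc (flip G) v w - 1) + (fromCyc G v w - 1)) ≤ s.card • (k - 2) := by
    refine Finset.sum_le_card_nsmul _ _ _ fun w hw => ?_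
    have h1 := fromCyc_add_le hk hC.inj hno ((hs w).1 hw)
    have h2 := fromCyc_lt (exists_not_from hcrit.1 hk hC.inj hno w)
    have h3 : fromCyc (flip G) v w < k := fromCyc_lt (exists_not_to hcrit.1 hk hC.inj hno w)
    omega
  rw [hm, smul_eq_mul] at hb
  obtain ⟨t, rfl⟩ : ∃ t, k = t + 2 := ⟨k - 2, by omega⟩
  simp only [Nat.add_sub_cancel, show t + 2 - 1 = t + 1 by omega] at hb ⊢
  nlinarith

theorem stmt16 {V : Type*} [Fintype V] (G : V → V → Prop) (n k : ℕ)
    (hn : Fintype.card V = n) (hirr : Irreflexive G) (hcrit : Critical G)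
    (hk : 3 ≤ k) (v : ZMod k → V) (hC : IsChordlessCycle G v)
    (hne : Set.range v ≠ Set.univ) :
    edgeCount G - edgeCount (Contract G (Set.range v)) ≤
      (k - 1) * n - (k ^ 2 - 2 * k + 2) := by
  classical
  have : NeZero k := ⟨by omega⟩
  obtain ⟨s, hs⟩ : ∃ s : Finset V, ∀ x, x ∈ s ↔ x ∉ Set.range v :=
    ⟨Finset.univ.filter fun x => x ∉ Set.range v, by simp⟩
  have hsne : s.Nonempty := by
    obtain ⟨x, hx⟩ := (Set.ne_univ_iff_exists_notMem _).1 hne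
    exact ⟨x, (hs x).2 hx⟩
  have hcount := edgeCount_le hC
  rw [← Finset.sum_subtype s hs
    (fun w => (fromCyc (flip G) v w - 1) + (fromCyc G v w - 1))] at hcount
  have hcard : n = k + s.card := by
    have h := sum_eq_range_add hC.inj (fun _ => 1)
    rw [← Finset.sum_subtype s hs (fun _ => 1)] at h
    simpa [ZMod.card, hn] using h
  have hS : ∑ w ∈ s, ((fromCyc (flip G) v w - 1) + (fromCyc G v w - 1)) + 2
      ≤ (k - 1) * s.card := by
    by_cases hby : ∃ i, Relation.ReflTransGen (Avoid G (v i)) (v (i - 1)) (v (i + 1))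
    · obtain ⟨i, hi⟩ := hby
      have := sum_le_of_bypass hcrit hC hi s.card s hs rfl
      omega
    · push Not at hby
      exact sum_le_of_no_bypass hcrit hk hC hby s.card s hs rfl hsne
  -- With `k = t + 1` the right-hand side equals `t * s.card + t - 1`.
  obtain ⟨t, rfl⟩ : ∃ t, k = t + 1 := ⟨k - 1, by omega⟩
  have e1 : (t + 1) ^ 2 - 2 * (t + 1) + 2 = t * t + 1 := by
    have : 4 ≤ t * t := Nat.mul_le_mul (show 2 ≤ t by omega) (show 2 ≤ t by omega)
    have : (t + 1) ^ 2 = t * t + 2 * t + 1 := by ring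
    omega
  have e2 : t * n = t * t + t + t * s.card := by rw [hcard]; ring
  rw [Nat.add_sub_cancel] at hS ⊢
  rw [e1, e2]
  omega
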